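/- arXiv:2505.08573 — 3 statements merged into one kernel-verified Lean document; each statement's English description precedes it below -/
import Mathlib

section
/- Let I be a nonempty finite index set, and for each i ∈ I let γ_i > 0 and α_i > 0 with α_i ≠ 1. Suppose λ > 0 satisfies ∑_{i∈I} γ_i^{(1−α_i)/α_i} · λ^{−1/α_i} = 1. Define y*_i = γ_i^{(1−α_i)/α_i} · λ^{−1/α_i}. Then y* is a global maximizer of the heterogeneous α-fair utility over the positive feasible region: for every y : I → ℝ with y_i > 0 for all i and ∑_{i∈I} y_i ≤ 1, one has ∑_{i∈I} (γ_i y_i)^{1−α_i}/(1−α_i) ≤ ∑_{i∈I} (γ_i y*_i)^{1−α_i}/(1−α_i). -/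
/-!
Each user's utility is concave, so it lies below its tangent line at the candidate allocation. The
candidate is chosen so that all these tangent lines have the same slope, the multiplier `lam`.
Summing the tangent inequalities bounds the total gain over the candidate by `lam` times the
additional bandwidth spent, which the budget constraint makes nonpositive.
-/

section ConcaveMaximization

theorem le_tangent_of_concaveOn {S : Set ℝ} {f : ℝ → ℝ} {f' x y : ℝ} (hf : ConcaveOn ℝ S f)
    (hx : x ∈ S) (hy : y ∈ S) (hf' : HasDerivAt f f' x) : f y ≤ f x + f' * (y - x) := by
  rcases lt_trichotomy x y with hxy | rfl | hyx
  · have hslope := hf.slope_le_of_hasDerivAt hx hy hxy hf'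
    rw [slope_def_field, div_le_iff₀ (sub_pos.mpr hxy)] at hslope
    linarith
  · simp
  · have hslope := hf.le_slope_of_hasDerivAt hy hx hyx hf'
    rw [slope_def_field, le_div_iff₀ (sub_pos.mpr hyx)] at hslope
    linarith

theorem sum_le_sum_of_concaveOn_of_hasDerivAt {ι : Type*} {s : Finset ι} {S : ι → Set ℝ}
    {f : ι → ℝ → ℝ} {x y : ι → ℝ} {lam : ℝ} (hf : ∀ i ∈ s, ConcaveOn ℝ (S i) (f i))
    (hx : ∀ i ∈ s, x i ∈ S i) (hy : ∀ i ∈ s, y i ∈ S i)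
    (hf' : ∀ i ∈ s, HasDerivAt (f i) lam (x i)) (hlam : 0 ≤ lam)
    (hxy : ∑ i ∈ s, y i ≤ ∑ i ∈ s, x i) :
    ∑ i ∈ s, f i (y i) ≤ ∑ i ∈ s, f i (x i) :=
  calc ∑ i ∈ s, f i (y i)
      ≤ ∑ i ∈ s, (f i (x i) + lam * (y i - x i)) :=
        Finset.sum_le_sum fun i hi ↦
          le_tangent_of_concaveOn (hf i hi) (hx i hi) (hy i hi) (hf' i hi)
    _ = ∑ i ∈ s, f i (x i) + lam * (∑ i ∈ s, y i - ∑ i ∈ s, x i) := by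
        rw [Finset.sum_add_distrib, ← Finset.mul_sum, Finset.sum_sub_distrib]
    _ ≤ ∑ i ∈ s, f i (x i) :=
        add_le_of_nonpos_right (mul_nonpos_of_nonneg_of_nonpos hlam (sub_nonpos.mpr hxy))

end ConcaveMaximization

/-- The `a`-fair utility of a rate `x`, with the usual convention of proportional fairness
(logarithmic utility) at `a = 1`. With this convention the marginal utility is `x ^ (-a)` for
every `a`. -/
noncomputable def alphaFairUtility (a x : ℝ) : ℝ :=
  if a = 1 then Real.log x else x ^ (1 - a) / (1 - a)

/-- The bandwidth share at which a user with spectral efficiency `g` and fairness parameter `a` has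
marginal utility of bandwidth equal to the multiplier `lam`. -/
noncomputable def kktAllocation (g a lam : ℝ) : ℝ :=
  g ^ ((1 - a) / a) * lam ^ (-1 / a)

section AlphaFairUtility

variable {a g lam x : ℝ}

theorem alphaFairUtility_of_ne_one (ha : a ≠ 1) (x : ℝ) :
    alphaFairUtility a x = x ^ (1 - a) / (1 - a) :=
  if_neg ha

theorem hasDerivAt_alphaFairUtility (a : ℝ) (hx : 0 < x) :
    HasDerivAt (alphaFairUtility a) (x ^ (-a)) x := by
  unfold alphaFairUtility
  split_ifs with ha
  · simpa only [ha, Real.rpow_neg_one] using Real.hasDerivAt_log hx.ne'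
  · have hpow := (Real.hasDerivAt_rpow_const (p := 1 - a) (Or.inl hx.ne')).div_const (1 - a)
    rwa [mul_div_cancel_left₀ _ (sub_ne_zero.mpr (Ne.symm ha)), sub_sub_cancel_left] at hpow

theorem concaveOn_alphaFairUtility (ha : 0 ≤ a) :
    ConcaveOn ℝ (Set.Ioi 0) (alphaFairUtility a) := by
  have hderiv (x : ℝ) (hx : x ∈ Set.Ioi 0) : HasDerivAt (alphaFairUtility a) (x ^ (-a)) x :=
    hasDerivAt_alphaFairUtility a hx
  refine AntitoneOn.concaveOn_of_deriv (convex_Ioi 0)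
    (fun x hx ↦ (hderiv x hx).continuousAt.continuousWithinAt) ?_ ?_ <;> rw [interior_Ioi]
  · exact fun x hx ↦ (hderiv x hx).differentiableAt.differentiableWithinAt
  · exact (Real.antitoneOn_rpow_Ioi_of_exponent_nonpos (neg_nonpos.mpr ha)).congr
      fun x hx ↦ (hderiv x hx).deriv.symm

theorem concaveOn_alphaFairUtility_const_mul (ha : 0 ≤ a) (hg : 0 < g) :
    ConcaveOn ℝ (Set.Ioi 0) fun x ↦ alphaFairUtility a (g * x) :=
  ((concaveOn_alphaFairUtility ha).comp_linearMap (LinearMap.mulLeft ℝ g)).subset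
    (fun _ hx ↦ mul_pos hg hx) (convex_Ioi 0)

theorem kktAllocation_pos (a : ℝ) (hg : 0 < g) (hlam : 0 < lam) : 0 < kktAllocation g a lam :=
  mul_pos (Real.rpow_pos_of_pos hg _) (Real.rpow_pos_of_pos hlam _)

theorem mul_kktAllocation (ha : a ≠ 0) (hg : 0 < g) (hlam : 0 < lam) :
    g * kktAllocation g a lam = (lam / g) ^ (-a⁻¹) :=
  calc g * (g ^ ((1 - a) / a) * lam ^ (-1 / a))
      = g ^ (1 + (1 - a) / a) * lam ^ (-1 / a) := by
        rw [Real.rpow_add hg, Real.rpow_one, mul_assoc]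
    _ = g ^ a⁻¹ * lam ^ (-a⁻¹) := by
        congr 2 <;> field_simp
        ring
    _ = (lam / g) ^ (-a⁻¹) := by
        rw [Real.div_rpow hlam.le hg.le, Real.rpow_neg hg.le, div_inv_eq_mul, mul_comm]

theorem mul_kktAllocation_rpow_neg_mul (ha : a ≠ 0) (hg : 0 < g) (hlam : 0 < lam) :
    (g * kktAllocation g a lam) ^ (-a) * g = lam := by
  rw [mul_kktAllocation ha hg hlam, ← Real.rpow_mul (div_pos hlam hg).le, neg_mul_neg,
    inv_mul_cancel₀ ha, Real.rpow_one, div_mul_cancel₀ _ hg.ne']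

theorem hasDerivAt_alphaFairUtility_kktAllocation (ha : a ≠ 0) (hg : 0 < g) (hlam : 0 < lam) :
    HasDerivAt (fun x ↦ alphaFairUtility a (g * x)) lam (kktAllocation g a lam) := by
  have hrate : 0 < g * kktAllocation g a lam := mul_pos hg (kktAllocation_pos a hg hlam)
  have hchain := (hasDerivAt_alphaFairUtility a hrate).comp (kktAllocation g a lam)
    (hasDerivAt_const_mul g)
  rwa [mul_kktAllocation_rpow_neg_mul ha hg hlam] at hchain

end AlphaFairUtility

theorem haf_ra_kkt_global_max_general {ι : Type*} {s : Finset ι} {γ α y : ι → ℝ} {lam : ℝ}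
    (hγ : ∀ i ∈ s, 0 < γ i) (hα : ∀ i ∈ s, 0 < α i) (hlam : 0 < lam) (hy : ∀ i ∈ s, 0 < y i)
    (hbudget : ∑ i ∈ s, y i ≤ ∑ i ∈ s, kktAllocation (γ i) (α i) lam) :
    ∑ i ∈ s, alphaFairUtility (α i) (γ i * y i) ≤
      ∑ i ∈ s, alphaFairUtility (α i) (γ i * kktAllocation (γ i) (α i) lam) :=
  sum_le_sum_of_concaveOn_of_hasDerivAt (f := fun i x ↦ alphaFairUtility (α i) (γ i * x))
    (fun i hi ↦ concaveOn_alphaFairUtility_const_mul (hα i hi).le (hγ i hi))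
    (fun i hi ↦ kktAllocation_pos (α i) (hγ i hi) hlam) hy
    (fun i hi ↦ hasDerivAt_alphaFairUtility_kktAllocation (hα i hi).ne' (hγ i hi) hlam)
    hlam.le hbudget

/-- Lemma 1 (KKT characterization of the optimal resource allocation at one BS):
the allocation `ystar i = γ i ^ ((1 - α i)/α i) * lam ^ (-1/α i)` with multiplier `lam`
satisfying the normalization condition maximizes the heterogeneous α-fair utility
over all positive allocations with total bandwidth at most 1. -/
theorem haf_ra_kkt_global_max {I : Type*} [Fintype I] [Nonempty I]
    (γ α : I → ℝ) (hγ : ∀ i, 0 < γ i) (hα : ∀ i, 0 < α i) (hα1 : ∀ i, α i ≠ 1)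
    (lam : ℝ) (hlam : 0 < lam)
    (hnorm : ∑ i, γ i ^ ((1 - α i) / α i) * lam ^ (-1 / α i) = 1)
    (ystar : I → ℝ) (hystar : ∀ i, ystar i = γ i ^ ((1 - α i) / α i) * lam ^ (-1 / α i)) :
    ∀ y : I → ℝ, (∀ i, 0 < y i) → ∑ i, y i ≤ 1 →
      ∑ i, (γ i * y i) ^ (1 - α i) / (1 - α i) ≤
        ∑ i, (γ i * ystar i) ^ (1 - α i) / (1 - α i) := by
  intro y hy hsum
  obtain rfl : ystar = fun i ↦ kktAllocation (γ i) (α i) lam := funext hystar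
  simpa only [alphaFairUtility_of_ne_one (hα1 _)] using haf_ra_kkt_global_max_general
    (fun i _ ↦ hγ i) (fun i _ ↦ hα i) hlam (fun i _ ↦ hy i) (hsum.trans_eq hnorm.symm)
end

section
/- Let α > 0 with α ≠ 1, and let γ, μ, γ', μ' > 0. Then (α/(1−α)) · γ^{(1−α)/α} · μ^{(α−1)/α} ≤ (α/(1−α)) · γ'^{(1−α)/α} · μ'^{(α−1)/α} if and only if γ/μ ≤ γ'/μ'. -/
theorem rpow_mul_rpow_neg_eq_div_rpow {x y : ℝ} (hx : 0 ≤ x) (hy : 0 ≤ y) (p : ℝ) :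
    x ^ p * y ^ (-p) = (x / y) ^ p := by
  rw [Real.rpow_neg hy, ← div_eq_mul_inv, Real.div_rpow hx hy]

theorem strictMonoOn_const_mul_rpow_Ioi {c p : ℝ} (hcp : 0 < c * p) :
    StrictMonoOn (fun x : ℝ => c * x ^ p) (Set.Ioi 0) := by
  intro x hx y _ hxy
  rcases pos_and_pos_or_neg_and_neg_of_mul_pos hcp with ⟨hc, hp⟩ | ⟨hc, hp⟩
  · exact mul_lt_mul_of_pos_left (Real.rpow_lt_rpow (le_of_lt hx) hxy hp) hc
  · exact mul_lt_mul_of_neg_left (Real.rpow_lt_rpow_of_neg hx hxy hp) hc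

theorem const_mul_rpow_mul_rpow_neg_le_iff {c p x y x' y' : ℝ} (hcp : 0 < c * p)
    (hx : 0 < x) (hy : 0 < y) (hx' : 0 < x') (hy' : 0 < y') :
    c * x ^ p * y ^ (-p) ≤ c * x' ^ p * y' ^ (-p) ↔ x / y ≤ x' / y' := by
  rw [mul_assoc, mul_assoc, rpow_mul_rpow_neg_eq_div_rpow hx.le hy.le,
    rpow_mul_rpow_neg_eq_div_rpow hx'.le hy'.le]
  exact (strictMonoOn_const_mul_rpow_Ioi hcp).le_iff_le (div_pos hx hy) (div_pos hx' hy')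

theorem dual_term_le_iff_ratio_le_general {α γ μ γ' μ' : ℝ} (hα : α ≠ 0) (hα1 : α ≠ 1)
    (hγ : 0 < γ) (hμ : 0 < μ) (hγ' : 0 < γ') (hμ' : 0 < μ') :
    (α / (1 - α)) * γ ^ ((1 - α) / α) * μ ^ ((α - 1) / α) ≤
        (α / (1 - α)) * γ' ^ ((1 - α) / α) * μ' ^ ((α - 1) / α) ↔
      γ / μ ≤ γ' / μ' := by
  have coeff_mul_exponent : α / (1 - α) * ((1 - α) / α) = 1 := by
    rw [div_mul_div_cancel₀ (sub_ne_zero.mpr hα1.symm), div_self hα]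
  have price_exponent : (α - 1) / α = -((1 - α) / α) := by ring
  rw [price_exponent]
  exact const_mul_rpow_mul_rpow_neg_le_iff (one_pos.trans_eq coeff_mul_exponent.symm) hγ hμ hγ' hμ'

/-- The optimal user-association rule (equation (24)): comparing the dual objective
terms is equivalent to comparing the price-normalized spectral efficiencies. -/
theorem dual_term_le_iff_ratio_le (α : ℝ) (hα : 0 < α) (hα1 : α ≠ 1)
    (γ μ γ' μ' : ℝ) (hγ : 0 < γ) (hμ : 0 < μ) (hγ' : 0 < γ') (hμ' : 0 < μ') :
    (α / (1 - α)) * γ ^ ((1 - α) / α) * μ ^ ((α - 1) / α) ≤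
        (α / (1 - α)) * γ' ^ ((1 - α) / α) * μ' ^ ((α - 1) / α) ↔
      γ / μ ≤ γ' / μ' :=
  dual_term_le_iff_ratio_le_general hα.ne' hα1 hγ hμ hγ' hμ'
end

section
/- Let I and J be finite index sets. For each i ∈ I let α_i > 0 with α_i ≠ 1, for each (i,j) let γ̂_{ij} > 0 and x_{ij} ∈ {0,1}, and let λ*, λ̂ : J → ℝ with λ*_j > 0 and λ̂_j > 0 for all j. Assume the feasibility condition ∑_{i∈I} γ̂_{ij} · λ̂_j^{−1/α_i} · x_{ij} = 1 holds for every j ∈ J. Define f* = ∑_{j∈J} ∑_{i∈I} (γ̂_{ij} x_{ij}/(1−α_i)) · λ̂_j^{(α_i−1)/α_i} and g* = ∑_{j∈J} λ*_j + ∑_{i∈I} ∑_{j∈J} (α_i/(1−α_i)) · γ̂_{ij} x_{ij} · (λ*_j)^{(α_i−1)/α_i}. Then g* − f* = ∑_{j∈J} (λ*_j − λ̂_j) + ∑_{i∈I} ∑_{j∈J} (α_i γ̂_{ij} x_{ij}/(1−α_i)) · ((λ*_j)^{(α_i−1)/α_i} − (λ̂_j)^{(α_i−1)/α_i}). -/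
/-!
Multiplying the bandwidth constraint of station `j` by `λ̂_j` gives
`λ̂_j = ∑ i, γ̂_{ij} x_{ij} λ̂_j ^ ((α_i - 1) / α_i)`. Since `1 / (1 - α) = 1 + α / (1 - α)`, this
turns the primal value at `λ̂` into the dual value at the same `λ̂`. The optimality gap is thus
a difference of two values of the dual function, which can be taken term by term.
-/

lemma mul_rpow_neg_one_div {t a : ℝ} (ht : 0 < t) (ha : a ≠ 0) :
    t * t ^ (-1 / a) = t ^ ((a - 1) / a) := by
  have exponent_eq : (a - 1) / a = 1 + -1 / a := by
    rw [sub_div, div_self ha, neg_div, sub_eq_add_neg]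
  rw [exponent_eq, Real.rpow_add ht, Real.rpow_one]

lemma sum_mul_rpow_eq_self_of_sum_eq_one {ι : Type*} {s : Finset ι} {α γ x : ι → ℝ} {t : ℝ}
    (ht : 0 < t) (hα : ∀ i ∈ s, α i ≠ 0) (hsum : ∑ i ∈ s, γ i * t ^ (-1 / α i) * x i = 1) :
    ∑ i ∈ s, γ i * x i * t ^ ((α i - 1) / α i) = t :=
  calc
    ∑ i ∈ s, γ i * x i * t ^ ((α i - 1) / α i)
      = ∑ i ∈ s, t * (γ i * t ^ (-1 / α i) * x i) := by
        refine Finset.sum_congr rfl fun i hi ↦ ?_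
        rw [← mul_rpow_neg_one_div ht (hα i hi)]
        ring
    _ = t := by rw [← Finset.mul_sum, hsum, mul_one]

section Duality

variable {I J : Type*} [Fintype I] [Fintype J]

/-- The heterogeneous `α`-fairness value (`f*` in the paper) of the allocation determined by the
multipliers `lam`, for adjusted spectral efficiencies `γ` and association indicators `x`. -/
noncomputable def primalValue (α : I → ℝ) (γ x : I → J → ℝ) (lam : J → ℝ) : ℝ :=
  ∑ j, ∑ i, (γ i j * x i j / (1 - α i)) * lam j ^ ((α i - 1) / α i)

/-- The Lagrangian dual function (`g*` in the paper, at the optimal multipliers), with the inner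
maximization already carried out and the association `x` fixed. -/
noncomputable def dualValue (α : I → ℝ) (γ x : I → J → ℝ) (lam : J → ℝ) : ℝ :=
  ∑ j, lam j + ∑ i, ∑ j, (α i / (1 - α i)) * γ i j * x i j * lam j ^ ((α i - 1) / α i)

variable {α : I → ℝ} {γ x : I → J → ℝ}

theorem primalValue_eq_dualValue {lam : J → ℝ} (hα : ∀ i, α i ≠ 0) (hα1 : ∀ i, α i ≠ 1)
    (hlam : ∀ j, 0 < lam j) (hfeas : ∀ j, ∑ i, γ i j * lam j ^ (-1 / α i) * x i j = 1) :
    primalValue α γ x lam = dualValue α γ x lam := by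
  have coeff_eq (i : I) : 1 / (1 - α i) = 1 + α i / (1 - α i) := by
    have : 1 - α i ≠ 0 := sub_ne_zero.mpr (hα1 i).symm
    field_simp
    ring
  have station_eq (j : J) :
      ∑ i, (γ i j * x i j / (1 - α i)) * lam j ^ ((α i - 1) / α i) =
        lam j + ∑ i, (α i / (1 - α i)) * γ i j * x i j * lam j ^ ((α i - 1) / α i) := by
    nth_rw 2 [← sum_mul_rpow_eq_self_of_sum_eq_one (hlam j) (fun i _ ↦ hα i) (hfeas j)]
    rw [← Finset.sum_add_distrib]
    refine Finset.sum_congr rfl fun i _ ↦ ?_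
    rw [div_eq_mul_one_div, coeff_eq]
    ring
  simp only [primalValue, dualValue, station_eq, Finset.sum_add_distrib]
  rw [Finset.sum_comm]

theorem dualValue_sub_dualValue (α : I → ℝ) (γ x : I → J → ℝ) (lam₁ lam₂ : J → ℝ) :
    dualValue α γ x lam₁ - dualValue α γ x lam₂ =
      ∑ j, (lam₁ j - lam₂ j) +
        ∑ i, ∑ j, (α i * γ i j * x i j / (1 - α i)) *
          (lam₁ j ^ ((α i - 1) / α i) - lam₂ j ^ ((α i - 1) / α i)) := by
  simp only [dualValue, add_sub_add_comm, ← Finset.sum_sub_distrib, ← mul_sub]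
  simp only [div_mul_eq_mul_div]

theorem optimality_gap_identity_general {lamStar lamHat : J → ℝ}
    (hα : ∀ i, α i ≠ 0) (hα1 : ∀ i, α i ≠ 1)
    (_hlamStar : ∀ j, 0 < lamStar j) (hlamHat : ∀ j, 0 < lamHat j)
    (hfeas : ∀ j, ∑ i, γ i j * lamHat j ^ (-1 / α i) * x i j = 1) :
    dualValue α γ x lamStar - primalValue α γ x lamHat =
      ∑ j, (lamStar j - lamHat j) +
        ∑ i, ∑ j, (α i * γ i j * x i j / (1 - α i)) *
          (lamStar j ^ ((α i - 1) / α i) - lamHat j ^ ((α i - 1) / α i)) := by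
  rw [primalValue_eq_dualValue hα hα1 hlamHat hfeas, dualValue_sub_dualValue]

end Duality

/-- Theorem 2 core computation (optimality gap, Appendix C): with feasible multipliers
`lamHat`, the gap between the dual value `g*` at `lamStar` and the primal HAF value
`f*` at `lamHat` equals the stated expression. -/
theorem optimality_gap_identity {I J : Type*} [Fintype I] [Fintype J]
    (α : I → ℝ) (hα : ∀ i, 0 < α i) (hα1 : ∀ i, α i ≠ 1)
    (γhat : I → J → ℝ) (hγhat : ∀ i j, 0 < γhat i j)
    (x : I → J → ℝ) (hx : ∀ i j, x i j = 0 ∨ x i j = 1)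
    (lamStar lamHat : J → ℝ) (hlamStar : ∀ j, 0 < lamStar j) (hlamHat : ∀ j, 0 < lamHat j)
    (hfeas : ∀ j, ∑ i, γhat i j * (lamHat j) ^ (-1 / α i) * x i j = 1) :
    (∑ j, lamStar j +
        ∑ i, ∑ j, (α i / (1 - α i)) * γhat i j * x i j * (lamStar j) ^ ((α i - 1) / α i)) -
      ∑ j, ∑ i, (γhat i j * x i j / (1 - α i)) * (lamHat j) ^ ((α i - 1) / α i) =
    ∑ j, (lamStar j - lamHat j) +
      ∑ i, ∑ j, (α i * γhat i j * x i j / (1 - α i)) *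
        ((lamStar j) ^ ((α i - 1) / α i) - (lamHat j) ^ ((α i - 1) / α i)) :=
  optimality_gap_identity_general (fun i ↦ (hα i).ne') hα1 hlamStar hlamHat hfeas
end
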